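/- Fix k ∈ ℕ. For all x ∈ ℝ and y_1,...,y_k ∈ ℝ, lim_{n→∞} ( P_n[(n − ρ_∞(σ))/√n ≤ x and ρ̄_q(σ) ≤ y_q for all 1 ≤ q ≤ k] − P_n[(n − ρ_∞(σ))/√n ≤ x]·P_n[ρ̄_q(σ) ≤ y_q for all 1 ≤ q ≤ k] ) = 0; i.e., (n − ρ_∞)/√n is asymptotically weakly independent of the random vector (ρ̄_1,...,ρ̄_k). -/

import Mathlib

open scoped BigOperators Classical
open Finset Filter

/-- Probability of an event under the uniform measure on `S_n`. -/
noncomputable def Pn {n : ℕ} (p : Equiv.Perm (Fin n) → Prop) : ℝ :=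
  ((Finset.univ.filter p).card : ℝ) / (Fintype.card (Equiv.Perm (Fin n)) : ℝ)

/-- Expectation under the uniform measure on `S_n`. -/
noncomputable def En {n : ℕ} (g : Equiv.Perm (Fin n) → ℝ) : ℝ :=
  (∑ σ : Equiv.Perm (Fin n), g σ) / (Fintype.card (Equiv.Perm (Fin n)) : ℝ)

/-- Variance under the uniform measure on `S_n`. -/
noncomputable def VarN {n : ℕ} (g : Equiv.Perm (Fin n) → ℝ) : ℝ :=
  En (fun σ => (g σ - En g) ^ 2)

/-- Spearman's metric `ρ_q(σ) = Σ_i |σ(i) − i|^q`. -/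
noncomputable def rhoq (q : ℕ) {n : ℕ} (σ : Equiv.Perm (Fin n)) : ℝ :=
  ∑ i : Fin n, |((σ i : ℕ) : ℝ) - ((i : ℕ) : ℝ)| ^ q

/-- Normalized Spearman's metric `ρ̄_q = (ρ_q − E ρ_q)/√(Var ρ_q)`. -/
noncomputable def rhoqBar (q : ℕ) {n : ℕ} (σ : Equiv.Perm (Fin n)) : ℝ :=
  (rhoq q σ - En (rhoq q (n := n))) / Real.sqrt (VarN (rhoq q (n := n)))

/-- Spearman's uniform metric `ρ_∞(σ) = max_i |σ(i) − i|` (as a natural number). -/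
def rhoInf {n : ℕ} (σ : Equiv.Perm (Fin n)) : ℕ :=
  Finset.univ.sup fun i : Fin n => (((σ i : ℕ) : ℤ) - ((i : ℕ) : ℤ)).natAbs


lemma lo_count {α : Type*} [Fintype α] (d : α → ℝ) (D t : ℝ) (hd : ∀ p, D ≤ |d p|) :
    ((Finset.univ : Finset (Finset α)).filter
      (fun S => t ≤ ∑ p ∈ S, d p ∧ ∑ p ∈ S, d p < t + D)).card ≤
      (Fintype.card α).choose (Fintype.card α / 2) := by
  set N : Finset α := Finset.univ.filter (fun p => d p < 0) with hN
  have hinj : Function.Injective (fun S : Finset α => symmDiff S N) :=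
    symmDiff_left_injective N
  rw [← Finset.card_image_of_injective _ hinj]
  apply IsAntichain.sperner
  intro A hA B hB hne hsub
  simp only [Finset.coe_image, Set.mem_image, Finset.mem_coe, Finset.mem_filter,
    Finset.mem_univ, true_and] at hA hB
  obtain ⟨S, ⟨hS1, hS2⟩, rfl⟩ := hA
  obtain ⟨T, ⟨hT1, hT2⟩, rfl⟩ := hB
  have hsub' : ∀ p, p ∈ symmDiff S N → p ∈ symmDiff T N := fun p hp => hsub hp
  obtain ⟨p₀, hp1, hp2⟩ : ∃ p, p ∈ symmDiff T N ∧ p ∉ symmDiff S N := by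
    by_contra hcon
    push Not at hcon
    exact hne (Finset.Subset.antisymm hsub hcon)
  have key : D ≤ ∑ p ∈ T, d p - ∑ p ∈ S, d p := by
    have e : ∀ X : Finset α, ∑ p ∈ X, d p = ∑ p, if p ∈ X then d p else 0 := by
      intro X; simp
    rw [e T, e S, ← Finset.sum_sub_distrib]
    have hterm : ∀ p, 0 ≤ (if p ∈ T then d p else 0) - (if p ∈ S then d p else 0) := by
      intro p
      have := hsub' p
      simp only [Finset.mem_symmDiff, hN, Finset.mem_filter, Finset.mem_univ, true_and] at this
      clear * - this
      by_cases h1 : p ∈ T <;> by_cases h2 : p ∈ S <;> by_cases h3 : d p < 0 <;>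
        simp_all <;> linarith
    refine le_trans ?_ (Finset.single_le_sum (fun p _ => hterm p) (Finset.mem_univ p₀))
    have h0 := hd p₀
    simp only [Finset.mem_symmDiff, hN, Finset.mem_filter, Finset.mem_univ, true_and] at hp1 hp2
    clear * - h0 hp1 hp2
    by_cases h3 : d p₀ < 0
    · rw [abs_of_neg h3] at h0
      by_cases h1 : p₀ ∈ T <;> by_cases h2 : p₀ ∈ S <;> simp_all
    · rw [abs_of_nonneg (not_lt.1 h3)] at h0
      by_cases h1 : p₀ ∈ T <;> by_cases h2 : p₀ ∈ S <;> simp_all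
  linarith

lemma lo_count2 {β : Type*} (Lo G : Finset β) (hG : G ⊆ Lo) (d : β → ℝ) (D t : ℝ)
    (hd : ∀ p ∈ G, D ≤ |d p|) :
    (Lo.powerset.filter
      (fun S => t ≤ ∑ p ∈ S, d p ∧ ∑ p ∈ S, d p < t + D)).card ≤
      G.card.choose (G.card / 2) * 2 ^ (Lo.card - G.card) := by
  have hbase := Finset.card_le_mul_card_image (f := fun S : Finset β => S \ G)
    (Lo.powerset.filter (fun S => t ≤ ∑ p ∈ S, d p ∧ ∑ p ∈ S, d p < t + D))
    (G.card.choose (G.card / 2)) ?_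
  · refine hbase.trans (Nat.mul_le_mul_left _ ?_)
    rw [← Finset.card_sdiff_of_subset hG, ← Finset.card_powerset]
    apply Finset.card_le_card
    intro X hX
    simp only [Finset.mem_image, Finset.mem_filter, Finset.mem_powerset] at hX ⊢
    obtain ⟨S, ⟨hS, _⟩, rfl⟩ := hX
    exact Finset.sdiff_subset_sdiff hS le_rfl
  · intro S' _
    have h1 := lo_count (α := G) (fun p => d p) D (t - ∑ p ∈ S', d p) (fun p => hd p p.2)
    rw [Fintype.card_coe] at h1
    refine le_trans ?_ h1
    apply Finset.card_le_card_of_injOn (fun S => S.subtype (· ∈ G))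
    · intro S hS
      simp only [Finset.coe_filter, Finset.mem_filter, Finset.mem_powerset, Set.mem_ofPred_eq,
        Finset.mem_univ, true_and] at hS ⊢
      obtain ⟨⟨_, hS1, hS2⟩, rfl⟩ := hS
      have : ∑ p ∈ S.subtype (· ∈ G), d p = ∑ p ∈ S ∩ G, d p := by
        rw [Finset.sum_subtype_eq_sum_filter, Finset.filter_mem_eq_inter]
      rw [this]
      have h2 := Finset.sum_inter_add_sum_sdiff S G d
      constructor <;> linarith
    · intro S hS T hT hST
      simp only [Finset.coe_filter, Finset.mem_filter, Finset.mem_powerset, Set.mem_ofPred_eq]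
        at hS hT
      ext p
      by_cases hp : p ∈ G
      · have := congrArg (fun X => (⟨p, hp⟩ : G) ∈ X) hST
        simpa using this
      · have := congrArg (fun X => p ∈ X) (hS.2.trans hT.2.symm)
        simpa [hp] using this

lemma lo_count3 {β : Type*} (Lo G : Finset β) (hG : G ⊆ Lo) (d : β → ℝ) (D t : ℝ) (J : ℕ)
    (hd : ∀ p ∈ G, D ≤ |d p|) :
    (Lo.powerset.filter
      (fun S => t ≤ ∑ p ∈ S, d p ∧ ∑ p ∈ S, d p < t + J * D)).card ≤
      J * (G.card.choose (G.card / 2) * 2 ^ (Lo.card - G.card)) := by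
  induction J with
  | zero =>
    simp only [Nat.cast_zero, zero_mul, add_zero, Nat.le_zero, Finset.card_eq_zero]
    apply Finset.filter_false_of_mem
    intro S _ h
    linarith [h.1, h.2]
  | succ J ih =>
    have h1 := lo_count2 Lo G hG d D (t + J * D) hd
    rw [Nat.add_mul, one_mul]
    refine le_trans ?_ (add_le_add ih h1)
    refine le_trans (Finset.card_le_card ?_) (Finset.card_union_le _ _)
    intro S hS
    simp only [Finset.mem_filter, Finset.mem_union] at hS ⊢
    push_cast at hS
    by_cases h : ∑ p ∈ S, d p < t + J * D
    · exact Or.inl ⟨hS.1, hS.2.1, h⟩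
    · exact Or.inr ⟨hS.1, not_lt.1 h, by linarith [hS.2.2]⟩

lemma cb_bound (m : ℕ) : (Nat.centralBinom m) ^ 2 * (2 * m + 1) ≤ 16 ^ m := by
  induction m with
  | zero => simp
  | succ m ih =>
    have h := Nat.succ_mul_centralBinom_succ m
    have h2 : (m + 1) ^ 2 * ((Nat.centralBinom (m + 1)) ^ 2 * (2 * (m + 1) + 1)) ≤
        (m + 1) ^ 2 * 16 ^ (m + 1) := by
      calc (m + 1) ^ 2 * ((Nat.centralBinom (m + 1)) ^ 2 * (2 * (m + 1) + 1))
          = ((m + 1) * Nat.centralBinom (m + 1)) ^ 2 * (2 * m + 3) := by ring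
        _ = (2 * (2 * m + 1) * Nat.centralBinom m) ^ 2 * (2 * m + 3) := by rw [h]
        _ = (Nat.centralBinom m ^ 2 * (2 * m + 1)) * (4 * ((2 * m + 1) * (2 * m + 3))) := by ring
        _ ≤ 16 ^ m * (4 * (4 * (m + 1) ^ 2)) := by
            apply Nat.mul_le_mul ih
            nlinarith
        _ = (m + 1) ^ 2 * 16 ^ (m + 1) := by ring
    exact Nat.le_of_mul_le_mul_left h2 (by positivity)

lemma cb_tendsto : Tendsto (fun m : ℕ => (Nat.centralBinom m : ℝ) / 4 ^ m) atTop (nhds 0) := by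
  have h : ∀ m : ℕ, (Nat.centralBinom m : ℝ) / 4 ^ m ≤ Real.sqrt (1 / (m + 1 : ℝ)) := by
    intro m
    apply Real.le_sqrt_of_sq_le
    rw [div_pow, div_le_div_iff₀ (by positivity) (by positivity)]
    have h1 : ((Nat.centralBinom m : ℝ)) ^ 2 * (2 * m + 1) ≤ 16 ^ m := by exact_mod_cast cb_bound m
    have h2 : ((4 : ℝ) ^ m) ^ 2 = 16 ^ m := by rw [← pow_mul, mul_comm, pow_mul]; norm_num
    rw [h2]
    refine le_trans (mul_le_mul_of_nonneg_left ?_ (by positivity)) (h1.trans (by simp))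
    have : (0 : ℝ) ≤ m := by positivity
    linarith
  have h2 : Tendsto (fun m : ℕ => Real.sqrt (1 / (m + 1 : ℝ))) atTop (nhds 0) := by
    have := (Real.continuous_sqrt.tendsto 0).comp (tendsto_one_div_add_atTop_nhds_zero_nat (𝕜 := ℝ))
    simpa [Function.comp_def] using this
  exact squeeze_zero (fun m => by positivity) h h2

section basics
variable {n : ℕ}

lemma card_pos' : (0 : ℝ) < (Fintype.card (Equiv.Perm (Fin n)) : ℝ) := by
  exact_mod_cast Fintype.card_pos

lemma Pn_eq_En (p : Equiv.Perm (Fin n) → Prop) :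
    Pn p = En (fun σ => if p σ then (1 : ℝ) else 0) := by
  unfold Pn En
  congr 1
  simp

lemma En_mono {f g : Equiv.Perm (Fin n) → ℝ} (h : ∀ σ, f σ ≤ g σ) : En f ≤ En g := by
  unfold En
  exact div_le_div_of_nonneg_right (Finset.sum_le_sum fun σ _ => h σ) card_pos'.le

lemma En_add (f g : Equiv.Perm (Fin n) → ℝ) : En (fun σ => f σ + g σ) = En f + En g := by
  unfold En
  rw [Finset.sum_add_distrib, add_div]

lemma En_sub (f g : Equiv.Perm (Fin n) → ℝ) : En (fun σ => f σ - g σ) = En f - En g := by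
  unfold En
  rw [Finset.sum_sub_distrib, sub_div]

lemma En_const (c : ℝ) : En (fun _ : Equiv.Perm (Fin n) => c) = c := by
  unfold En
  have := card_pos' (n := n)
  rw [Finset.sum_const, nsmul_eq_mul, Finset.card_univ]
  field_simp

lemma En_mul (c : ℝ) (f : Equiv.Perm (Fin n) → ℝ) : En (fun σ => c * f σ) = c * En f := by
  unfold En
  rw [← Finset.mul_sum, mul_div_assoc]

lemma En_sum {ι : Type*} (s : Finset ι) (f : ι → Equiv.Perm (Fin n) → ℝ) :
    En (fun σ => ∑ i ∈ s, f i σ) = ∑ i ∈ s, En (f i) := by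
  unfold En
  rw [Finset.sum_comm, Finset.sum_div]

lemma En_comp (e : Equiv.Perm (Fin n) ≃ Equiv.Perm (Fin n)) (f : Equiv.Perm (Fin n) → ℝ) :
    En (fun σ => f (e σ)) = En f := by
  unfold En
  rw [Equiv.sum_comp e f]

lemma Pn_comp (e : Equiv.Perm (Fin n) ≃ Equiv.Perm (Fin n)) (p : Equiv.Perm (Fin n) → Prop) :
    Pn (fun σ => p (e σ)) = Pn p := by
  rw [Pn_eq_En, Pn_eq_En]
  exact En_comp e (fun σ => if p σ then (1 : ℝ) else 0)

lemma Pn_nonneg (p : Equiv.Perm (Fin n) → Prop) : 0 ≤ Pn p := by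
  unfold Pn; positivity

lemma Pn_mono {p r : Equiv.Perm (Fin n) → Prop} (h : ∀ σ, p σ → r σ) : Pn p ≤ Pn r := by
  rw [Pn_eq_En, Pn_eq_En]
  apply En_mono
  intro σ
  by_cases hp : p σ
  · simp [hp, h σ hp]
  · simp only [hp, if_false]; split_ifs <;> norm_num

lemma Pn_true : Pn (fun _ : Equiv.Perm (Fin n) => True) = 1 := by
  rw [Pn_eq_En]; simpa using En_const (n := n) 1

lemma Pn_le_one (p : Equiv.Perm (Fin n) → Prop) : Pn p ≤ 1 := by
  rw [← Pn_true (n := n)]; exact Pn_mono fun _ _ => trivial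

lemma Pn_or (p r : Equiv.Perm (Fin n) → Prop) : Pn (fun σ => p σ ∨ r σ) ≤ Pn p + Pn r := by
  rw [Pn_eq_En, Pn_eq_En, Pn_eq_En, ← En_add]
  apply En_mono
  intro σ
  by_cases h1 : p σ <;> by_cases h2 : r σ <;> simp [h1, h2]

lemma Pn_exists {ι : Type*} (s : Finset ι) (p : ι → Equiv.Perm (Fin n) → Prop) :
    Pn (fun σ => ∃ i ∈ s, p i σ) ≤ ∑ i ∈ s, Pn (p i) := by
  simp_rw [Pn_eq_En]
  rw [← En_sum]
  apply En_mono
  intro σ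
  split_ifs with h
  · obtain ⟨i, hi, hp⟩ := h
    refine le_trans ?_ (Finset.single_le_sum (f := fun i => if p i σ then (1 : ℝ) else 0)
      (fun j _ => by split_ifs <;> norm_num) hi)
    simp [hp]
  · exact Finset.sum_nonneg fun j _ => by split_ifs <;> norm_num

lemma Pn_split (p r : Equiv.Perm (Fin n) → Prop) :
    Pn p = Pn (fun σ => p σ ∧ r σ) + Pn (fun σ => p σ ∧ ¬ r σ) := by
  rw [Pn_eq_En, Pn_eq_En, Pn_eq_En, ← En_add]
  congr 1
  ext σ
  by_cases h1 : p σ <;> by_cases h2 : r σ <;> simp [h1, h2]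

lemma Pn_diff (p r b : Equiv.Perm (Fin n) → Prop) (h : ∀ σ, ¬ b σ → (p σ ↔ r σ)) :
    |Pn p - Pn r| ≤ Pn b := by
  have h1 : Pn p ≤ Pn r + Pn b := by
    refine le_trans (Pn_mono ?_) (Pn_or r b)
    intro σ hp
    by_cases hb : b σ
    · exact Or.inr hb
    · exact Or.inl ((h σ hb).1 hp)
  have h2 : Pn r ≤ Pn p + Pn b := by
    refine le_trans (Pn_mono ?_) (Pn_or p b)
    intro σ hp
    by_cases hb : b σ
    · exact Or.inr hb
    · exact Or.inl ((h σ hb).2 hp)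
  rw [abs_le]; constructor <;> linarith

/-- single value law -/
lemma Pn_mem (i : Fin n) (R : Finset (Fin n)) :
    (n : ℝ) * Pn (fun σ : Equiv.Perm (Fin n) => σ i ∈ R) = R.card := by
  have h1 : ∀ j : Fin n, Pn (fun σ : Equiv.Perm (Fin n) => σ j ∈ R) =
      Pn (fun σ : Equiv.Perm (Fin n) => σ i ∈ R) := by
    intro j
    have := Pn_comp (Equiv.mulRight (Equiv.swap i j)) (fun σ : Equiv.Perm (Fin n) => σ i ∈ R)
    simpa using this
  have h2 : ∑ j : Fin n, Pn (fun σ : Equiv.Perm (Fin n) => σ j ∈ R) = R.card := by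
    simp_rw [Pn_eq_En]
    rw [← En_sum, ← En_const (n := n) (R.card : ℝ)]
    congr 1
    ext σ
    have h3 := Equiv.sum_comp σ (fun v => if v ∈ R then (1 : ℝ) else 0)
    have h4 : ∑ v, (if v ∈ R then (1 : ℝ) else 0) = R.card := by simp
    rw [← h4, ← h3]
    congr!
  rw [Finset.sum_congr rfl fun j _ => h1 j] at h2
  simpa using h2

lemma Pn_inv_mem (i : Fin n) (R : Finset (Fin n)) :
    (n : ℝ) * Pn (fun σ : Equiv.Perm (Fin n) => σ⁻¹ i ∈ R) = R.card := by
  rw [← Pn_mem i R]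
  congr 1
  exact Pn_comp (Equiv.inv _) (fun σ : Equiv.Perm (Fin n) => σ i ∈ R)

lemma card_near (w : ℕ) (u : Fin n) :
    ((Finset.univ.filter (fun v : Fin n => (u : ℕ) < v + w ∧ (v : ℕ) < u + w)).card) ≤ 2 * w := by
  have h : (Finset.univ.filter (fun v : Fin n => (u : ℕ) < v + w ∧ (v : ℕ) < u + w)).card ≤
      (Finset.Ico ((u : ℕ) + 1 - w) (u + w)).card := by
    apply Finset.card_le_card_of_injOn (fun v : Fin n => (v : ℕ))
    · intro v hv
      simp at hv ⊢
      omega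
    · intro a _ b _ h
      exact Fin.ext h
  rw [Nat.card_Ico] at h
  omega

lemma Pn_near (a b : Fin n) (hab : a ≠ b) (w : ℕ) :
    ((n : ℝ) - 1) * Pn (fun σ : Equiv.Perm (Fin n) =>
      (σ a : ℕ) < σ b + w ∧ (σ b : ℕ) < σ a + w) ≤ 2 * w := by
  have h1 : ∀ c ∈ (Finset.univ.erase a : Finset (Fin n)), Pn (fun σ : Equiv.Perm (Fin n) =>
      (σ a : ℕ) < σ c + w ∧ (σ c : ℕ) < σ a + w) = Pn (fun σ : Equiv.Perm (Fin n) =>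
      (σ a : ℕ) < σ b + w ∧ (σ b : ℕ) < σ a + w) := by
    intro c hc
    have hca : a ≠ c := (Finset.ne_of_mem_erase hc).symm
    have := Pn_comp (Equiv.mulRight (Equiv.swap b c)) (fun σ : Equiv.Perm (Fin n) =>
      (σ a : ℕ) < σ b + w ∧ (σ b : ℕ) < σ a + w)
    simpa [Equiv.swap_apply_of_ne_of_ne hab hca] using this
  have h2 : ∑ c ∈ (Finset.univ.erase a : Finset (Fin n)), Pn (fun σ : Equiv.Perm (Fin n) =>
      (σ a : ℕ) < σ c + w ∧ (σ c : ℕ) < σ a + w) ≤ 2 * w := by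
    simp_rw [Pn_eq_En]
    rw [← En_sum, ← En_const (n := n) (2 * w : ℝ)]
    apply En_mono
    intro σ
    refine le_trans (Finset.sum_le_sum_of_subset_of_nonneg (Finset.subset_univ _)
      (fun j _ _ => by split_ifs <;> norm_num)) ?_
    have h3 := Equiv.sum_comp σ
      (fun v => if (σ a : ℕ) < v + w ∧ (v : ℕ) < σ a + w then (1 : ℝ) else 0)
    have h4 : ((Finset.univ.filter (fun v : Fin n =>
      ((σ a : Fin n) : ℕ) < v + w ∧ (v : ℕ) < σ a + w)).card : ℝ) ≤ 2 * w := by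
      exact_mod_cast card_near w (σ a)
    rw [← Finset.sum_boole, ← h3] at h4
    refine le_trans (le_of_eq ?_) h4
    congr!
  rw [Finset.sum_congr rfl h1, Finset.sum_const, nsmul_eq_mul,
    Finset.card_erase_of_mem (Finset.mem_univ _)] at h2
  have hn : 1 ≤ n := by have := a.2; omega
  simpa [Nat.cast_sub hn] using h2

lemma switch_count (i j : Fin n) (F : Equiv.Perm (Fin n) → Prop) :
    Pn (fun τ => F (Equiv.swap (τ i) j * τ)) = n * Pn (fun σ => σ i = j ∧ F σ) := by
  have h1 : ∀ v : Fin n, Pn (fun τ => τ i = v ∧ F (Equiv.swap v j * τ)) =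
      Pn (fun σ => σ i = j ∧ F σ) := by
    intro v
    have := Pn_comp (Equiv.mulLeft (Equiv.swap v j)) (fun σ => σ i = j ∧ F σ)
    rw [← this]
    congr 1
    ext τ
    simp only [Equiv.coe_mulLeft, Equiv.Perm.mul_apply, Equiv.swap_apply_eq_iff,
      Equiv.swap_apply_right]
  have h2 : Pn (fun τ => F (Equiv.swap (τ i) j * τ)) =
      ∑ v : Fin n, Pn (fun τ => τ i = v ∧ F (Equiv.swap v j * τ)) := by
    simp_rw [Pn_eq_En]
    rw [← En_sum]
    congr 1
    ext τ
    rw [Finset.sum_eq_single (τ i)]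
    · simp
    · intro v _ hv
      simp [hv.symm]
    · simp
  rw [h2, Finset.sum_congr rfl fun v _ => h1 v]
  simp

end basics

section core
variable {n : ℕ}

lemma abs_fin_le (a b : Fin n) : |((a : ℕ) : ℝ) - ((b : ℕ) : ℝ)| ≤ n := by
  have h1 : ((a : ℕ) : ℝ) ≤ n := by exact_mod_cast a.2.le
  have h2 : ((b : ℕ) : ℝ) ≤ n := by exact_mod_cast b.2.le
  have h3 : (0 : ℝ) ≤ ((a : ℕ) : ℝ) := by positivity
  have h4 : (0 : ℝ) ≤ ((b : ℕ) : ℝ) := by positivity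
  rw [abs_le]; constructor <;> linarith

lemma switch_ne (τ : Equiv.Perm (Fin n)) (i j x : Fin n) (h1 : x ≠ i) (h2 : x ≠ τ⁻¹ j) :
    (Equiv.swap (τ i) j * τ) x = τ x := by
  rw [Equiv.Perm.mul_apply]
  apply Equiv.swap_apply_of_ne_of_ne
  · exact fun h => h1 (τ.injective h)
  · intro h
    apply h2
    rw [← h]; simp

lemma rhoq_switch (q : ℕ) (τ : Equiv.Perm (Fin n)) (i j : Fin n) :
    |rhoq q (Equiv.swap (τ i) j * τ) - rhoq q τ| ≤ 2 * (n : ℝ) ^ q := by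
  unfold rhoq
  rw [← Finset.sum_sub_distrib]
  refine (Finset.abs_sum_le_sum_abs _ _).trans ?_
  have : ∀ x : Fin n, |(|(((Equiv.swap (τ i) j * τ) x : ℕ) : ℝ) - ((x : ℕ) : ℝ)| ^ q -
      |((τ x : ℕ) : ℝ) - ((x : ℕ) : ℝ)| ^ q)| ≤
      (if x = i then (n : ℝ) ^ q else 0) + (if x = τ⁻¹ j then (n : ℝ) ^ q else 0) := by
    intro x
    have hn : (0 : ℝ) ≤ (n : ℝ) ^ q := by positivity
    by_cases h : x = i ∨ x = τ⁻¹ j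
    · have ha : |(|(((Equiv.swap (τ i) j * τ) x : ℕ) : ℝ) - ((x : ℕ) : ℝ)| ^ q -
        |((τ x : ℕ) : ℝ) - ((x : ℕ) : ℝ)| ^ q)| ≤ (n : ℝ) ^ q := by
        have b1 := pow_le_pow_left₀ (abs_nonneg _) (abs_fin_le ((Equiv.swap (τ i) j * τ) x) x) q
        have b2 := pow_le_pow_left₀ (abs_nonneg _) (abs_fin_le (τ x) x) q
        have b3 : 0 ≤ |(((Equiv.swap (τ i) j * τ) x : ℕ) : ℝ) - ((x : ℕ) : ℝ)| ^ q := by positivity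
        have b4 : 0 ≤ |((τ x : ℕ) : ℝ) - ((x : ℕ) : ℝ)| ^ q := by positivity
        rw [abs_le]; constructor <;> linarith
      refine ha.trans ?_
      rcases h with h | h
      · rw [if_pos h]; split_ifs <;> linarith
      · rw [if_pos h]; split_ifs <;> linarith
    · push Not at h
      rw [switch_ne τ i j x h.1 h.2]
      rw [if_neg h.1, if_neg h.2]; simp
  refine (Finset.sum_le_sum fun x _ => this x).trans ?_
  rw [Finset.sum_add_distrib]
  simp
  linarith

/-- `σ` avoids the board. -/
def Avoid (Bd : Finset (Fin n × Fin n)) (σ : Equiv.Perm (Fin n)) : Prop :=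
  ∀ c ∈ Bd, σ c.1 ≠ c.2

lemma avoid_switch (R : Finset (Fin n)) (Bd : Finset (Fin n × Fin n)) (hBd : Bd ⊆ R ×ˢ R)
    (i j : Fin n) (hij : (i, j) ∉ Bd) (τ : Equiv.Perm (Fin n)) (h1 : τ i ∉ R)
    (h2 : τ⁻¹ j ∉ R) : Avoid Bd τ ↔ Avoid Bd (Equiv.swap (τ i) j * τ) := by
  unfold Avoid
  apply forall₂_congr
  rintro ⟨x, y⟩ hc
  have hR := hBd hc
  rw [Finset.mem_product] at hR
  simp only at hR ⊢
  have hx2 : x ≠ τ⁻¹ j := fun h => h2 (h ▸ hR.1)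
  by_cases hx : x = i
  · subst hx
    have e1 : τ x ≠ y := fun h => h1 (h ▸ hR.2)
    have e2 : (Equiv.swap (τ x) j * τ) x ≠ y := by
      rw [Equiv.Perm.mul_apply, Equiv.swap_apply_left]
      rintro rfl
      exact hij hc
    exact iff_of_true e1 e2
  · rw [switch_ne τ i j x hx hx2]

lemma avoid_step (hn : 0 < n) (R : Finset (Fin n)) (Bd : Finset (Fin n × Fin n))
    (hBd : Bd ⊆ R ×ˢ R) (i j : Fin n) (hij : (i, j) ∉ Bd) (B bad : Equiv.Perm (Fin n) → Prop)
    (hbad : ∀ τ i j, ¬ bad τ → (B τ ↔ B (Equiv.swap (τ i) j * τ))) :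
    |Pn (fun σ => Avoid Bd σ ∧ B σ) - n * Pn (fun σ => σ i = j ∧ Avoid Bd σ ∧ B σ)| ≤
      2 * R.card / n + Pn bad := by
  have hn' : (0 : ℝ) < n := by exact_mod_cast hn
  rw [← switch_count i j (fun σ => Avoid Bd σ ∧ B σ)]
  refine (Pn_diff _ _ (fun τ => τ i ∈ R ∨ τ⁻¹ j ∈ R ∨ bad τ) ?_).trans ?_
  · intro τ h
    push Not at h
    rw [← avoid_switch R Bd hBd i j hij τ h.1 h.2.1, ← hbad τ i j h.2.2]
  · refine (Pn_or _ _).trans ?_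
    have h1 : Pn (fun τ : Equiv.Perm (Fin n) => τ i ∈ R) = R.card / n := by
      rw [← Pn_mem i R]; field_simp
    have h2 : Pn (fun τ : Equiv.Perm (Fin n) => τ⁻¹ j ∈ R) = R.card / n := by
      rw [← Pn_inv_mem j R]; field_simp
    have h3 := Pn_or (fun τ : Equiv.Perm (Fin n) => τ⁻¹ j ∈ R) bad
    rw [h1]
    rw [h2] at h3
    have : (2 * R.card / n : ℝ) = R.card / n + R.card / n := by ring
    linarith

lemma avoid_induct (hn : 0 < n) (R : Finset (Fin n)) (B bad : Equiv.Perm (Fin n) → Prop)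
    (hbad : ∀ τ i j, ¬ bad τ → (B τ ↔ B (Equiv.swap (τ i) j * τ)))
    (Bd : Finset (Fin n × Fin n)) (hBd : Bd ⊆ R ×ˢ R) :
    |Pn (fun σ => Avoid Bd σ ∧ B σ) - (1 - 1 / (n : ℝ)) ^ Bd.card * Pn B| ≤
      Bd.card * ((2 * R.card / n + Pn bad) / n) := by
  have hn' : (1 : ℝ) ≤ n := by exact_mod_cast hn
  induction Bd using Finset.induction_on with
  | empty => simp [Avoid]
  | insert c Bd hc ih =>
    obtain ⟨i, j⟩ := c
    have hsub : Bd ⊆ R ×ˢ R := (Finset.subset_insert _ _).trans hBd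
    have ih := ih hsub
    have hs := avoid_step hn R Bd hsub i j hc B bad hbad
    have hsp := Pn_split (fun σ => Avoid Bd σ ∧ B σ) (fun σ => σ i = j)
    have e1 : Pn (fun σ : Equiv.Perm (Fin n) => (Avoid Bd σ ∧ B σ) ∧ σ i = j) =
        Pn (fun σ : Equiv.Perm (Fin n) => σ i = j ∧ Avoid Bd σ ∧ B σ) := by
      congr 1; ext σ; tauto
    have e2 : Pn (fun σ : Equiv.Perm (Fin n) => (Avoid Bd σ ∧ B σ) ∧ ¬ σ i = j) =
        Pn (fun σ : Equiv.Perm (Fin n) => Avoid (insert (i, j) Bd) σ ∧ B σ) := by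
      congr 1; ext σ
      simp only [Avoid, Finset.forall_mem_insert]
      tauto
    rw [e1, e2] at hsp
    rw [Finset.card_insert_of_notMem hc]
    set X := Pn (fun σ : Equiv.Perm (Fin n) => Avoid Bd σ ∧ B σ)
    set Y := Pn (fun σ : Equiv.Perm (Fin n) => σ i = j ∧ Avoid Bd σ ∧ B σ)
    set Z := Pn (fun σ : Equiv.Perm (Fin n) => Avoid (insert (i, j) Bd) σ ∧ B σ)
    set e := 2 * (R.card : ℝ) / n + Pn bad
    set a := (1 - 1 / (n : ℝ)) with ha
    have ha0 : 0 ≤ a := by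
      rw [ha, sub_nonneg, div_le_one (by linarith)]; exact hn'
    have ha1 : a ≤ 1 := by
      rw [ha]; have : 0 ≤ 1 / (n : ℝ) := by positivity
      linarith
    have hZ : Z - a ^ (Bd.card + 1) * Pn B = (X - n * Y) / n + a * (X - a ^ Bd.card * Pn B) := by
      have : Z = X - Y := by linarith
      have n1 : (X - n * Y) / n = X / n - Y := by field_simp
      have n2 : X / n = X - a * X := by rw [ha]; ring
      rw [n1, n2, this, pow_succ]
      ring
    rw [hZ]
    refine (abs_add_le _ _).trans ?_
    rw [abs_div, abs_mul, abs_of_nonneg ha0, abs_of_nonneg (by linarith : (0 : ℝ) ≤ n)]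
    have t1 : |X - n * Y| / n ≤ e / n := div_le_div_of_nonneg_right hs (by linarith)
    have t2 : a * |X - a ^ Bd.card * Pn B| ≤ 1 * (Bd.card * (e / n)) :=
      mul_le_mul ha1 ih (abs_nonneg _) zero_le_one
    push_cast
    linarith

lemma avoid_indep (hn : 0 < n) (R : Finset (Fin n)) (B bad : Equiv.Perm (Fin n) → Prop)
    (hbad : ∀ τ i j, ¬ bad τ → (B τ ↔ B (Equiv.swap (τ i) j * τ)))
    (Bd : Finset (Fin n × Fin n)) (hBd : Bd ⊆ R ×ˢ R) :
    |Pn (fun σ => Avoid Bd σ ∧ B σ) - Pn (fun σ => Avoid Bd σ) * Pn B| ≤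
      2 * ((R.card : ℝ) ^ 2 / n * (2 * R.card / n + Pn bad)) := by
  have h1 := avoid_induct hn R B bad hbad Bd hBd
  have h2 := avoid_induct hn R (fun _ => True) (fun _ => False) (by simp) Bd hBd
  have hF : Pn (fun _ : Equiv.Perm (Fin n) => False) = 0 := by simp [Pn]
  simp only [and_true, Pn_true, hF, add_zero, mul_one] at h2
  have hn' : (1 : ℝ) ≤ n := by exact_mod_cast hn
  set r := (R.card : ℝ)
  have hr : (Bd.card : ℝ) ≤ r ^ 2 := by
    have := Finset.card_le_card hBd
    rw [Finset.card_product] at this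
    have h' : (Bd.card : ℝ) ≤ (R.card : ℝ) * (R.card : ℝ) := by exact_mod_cast this
    rw [sq]; exact h'
  have hb0 := Pn_nonneg bad
  have hB0 := Pn_nonneg B
  have hB1 := Pn_le_one B
  have hr0 : 0 ≤ r := by positivity
  set e := 2 * r / n + Pn bad with he
  have he0 : 2 * r / n ≤ e := by linarith
  have hq0 : 0 ≤ 2 * r / n := by positivity
  have k1 : Bd.card * (e / n) ≤ r ^ 2 / n * e := by
    have : (Bd.card : ℝ) * (e / n) ≤ r ^ 2 * (e / n) :=
      mul_le_mul_of_nonneg_right hr (div_nonneg (by linarith) (by linarith))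
    calc _ ≤ _ := this
      _ = _ := by ring
  have k2 : Bd.card * (2 * r / n / n) ≤ r ^ 2 / n * e := by
    refine le_trans (mul_le_mul_of_nonneg_left ?_ (by positivity)) k1
    exact div_le_div_of_nonneg_right he0 (by linarith)
  set a := (1 - 1 / (n : ℝ)) ^ Bd.card
  have : Pn (fun σ => Avoid Bd σ ∧ B σ) - Pn (fun σ => Avoid Bd σ) * Pn B =
      (Pn (fun σ => Avoid Bd σ ∧ B σ) - a * Pn B) - Pn B * (Pn (fun σ => Avoid Bd σ) - a) := by
    ring
  rw [this]
  refine (abs_sub _ _).trans ?_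
  rw [abs_mul, abs_of_nonneg hB0]
  have t2 : Pn B * |Pn (fun σ => Avoid Bd σ) - a| ≤ 1 * (r ^ 2 / n * e) :=
    mul_le_mul hB1 (h2.trans k2) (abs_nonneg _) zero_le_one
  linarith [h1.trans k1]

end core

section levy
variable {n : ℕ}

lemma sum_boole_cl {ι : Type*} (s : Finset ι) (p : ι → Prop) :
    ∑ i ∈ s, @ite ℝ (p i) (Classical.propDecidable _) 1 0 =
      ((@Finset.filter ι p (fun _ => Classical.propDecidable _) s).card : ℝ) := by
  rw [Finset.card_filter]; push_cast; rfl

/-- Flip the pairs `{i, rev i}` indexed by `S`. -/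
def flipS (S : Finset (Fin n)) : Equiv.Perm (Fin n) :=
  Function.Involutive.toPerm (fun i => if i ∈ S ∨ Fin.rev i ∈ S then Fin.rev i else i) (by
    intro i
    by_cases h : i ∈ S ∨ Fin.rev i ∈ S
    · have h' : Fin.rev i ∈ S ∨ i ∈ S := h.symm
      simp [h, h']
    · simp [h])

lemma flipS_apply (S : Finset (Fin n)) (i : Fin n) :
    flipS S i = if i ∈ S ∨ Fin.rev i ∈ S then Fin.rev i else i := rfl

/-- Half of the increment. -/
noncomputable def eInc (q : ℕ) (σ : Equiv.Perm (Fin n)) (i : Fin n) : ℝ :=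
  |((σ (Fin.rev i) : ℕ) : ℝ) - ((i : ℕ) : ℝ)| ^ q - |((σ i : ℕ) : ℝ) - ((i : ℕ) : ℝ)| ^ q

/-- Increment of `ρ_q` under one flip. -/
noncomputable def dInc (q : ℕ) (σ : Equiv.Perm (Fin n)) (p : Fin n) : ℝ :=
  eInc q σ p + eInc q σ (Fin.rev p)

lemma rhoq_flip (q : ℕ) (σ : Equiv.Perm (Fin n)) (S : Finset (Fin n))
    (hS : ∀ i ∈ S, Fin.rev i ∉ S) :
    rhoq q (σ * flipS S) = rhoq q σ + ∑ p ∈ S, dInc q σ p := by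
  have h1 : rhoq q (σ * flipS S) - rhoq q σ =
      ∑ i, ((if i ∈ S then eInc q σ i else 0) + (if Fin.rev i ∈ S then eInc q σ i else 0)) := by
    unfold rhoq
    rw [← Finset.sum_sub_distrib]
    apply Finset.sum_congr rfl
    intro i _
    rw [Equiv.Perm.mul_apply, flipS_apply]
    by_cases h : i ∈ S
    · simp [h, hS i h, eInc]
    · by_cases h' : Fin.rev i ∈ S
      · simp [h, h', eInc]
      · simp [h, h']
  have h2 : ∑ i, (if Fin.rev i ∈ S then eInc q σ i else 0) =
      ∑ i, (if i ∈ S then eInc q σ (Fin.rev i) else 0) := by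
    rw [← Equiv.sum_comp Fin.revPerm]
    simp
  rw [Finset.sum_add_distrib, h2] at h1
  simp only [Finset.sum_ite_mem, Finset.univ_inter] at h1
  rw [← Finset.sum_add_distrib] at h1
  unfold dInc
  linarith

lemma pow_ineq (q : ℕ) (hq : q ≠ 0) (a b u v : ℝ) (h1 : a ≤ v) (h2 : v ≤ u) (h3 : u ≤ b) :
    (u - v) ^ q ≤ |v - a| ^ q * (-1) + |v - b| ^ q + |u - a| ^ q - |u - b| ^ q := by
  rw [abs_of_nonneg (by linarith : 0 ≤ v - a), abs_of_nonneg (by linarith : 0 ≤ u - a),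
    abs_of_nonpos (by linarith : v - b ≤ 0), abs_of_nonpos (by linarith : u - b ≤ 0)]
  have e1 := pow_add_pow_le (by linarith : 0 ≤ u - v) (by linarith : 0 ≤ v - a) hq
  have e2 : (u - v) + (v - a) = u - a := by ring
  rw [e2] at e1
  have e3 := pow_le_pow_left₀ (by linarith : 0 ≤ -(u - b)) (by linarith : -(u - b) ≤ -(v - b)) q
  linarith

lemma dInc_lower (q : ℕ) (hq : q ≠ 0) (σ : Equiv.Perm (Fin n)) (p : Fin n) (w : ℕ)
    (h1 : p ≤ σ p) (h2 : σ p ≤ Fin.rev p) (h3 : p ≤ σ (Fin.rev p)) (h4 : σ (Fin.rev p) ≤ Fin.rev p)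
    (h5 : ¬ ((σ p : ℕ) < σ (Fin.rev p) + w ∧ (σ (Fin.rev p) : ℕ) < σ p + w)) :
    (w : ℝ) ^ q ≤ |dInc q σ p| := by
  unfold dInc eInc
  rw [Fin.rev_rev]
  have c1 : ((p : ℕ) : ℝ) ≤ ((σ p : ℕ) : ℝ) := by exact_mod_cast h1
  have c2 : ((σ p : ℕ) : ℝ) ≤ ((Fin.rev p : ℕ) : ℝ) := by exact_mod_cast h2
  have c3 : ((p : ℕ) : ℝ) ≤ ((σ (Fin.rev p) : ℕ) : ℝ) := by exact_mod_cast h3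
  have c4 : ((σ (Fin.rev p) : ℕ) : ℝ) ≤ ((Fin.rev p : ℕ) : ℝ) := by exact_mod_cast h4
  have hw : (0 : ℝ) ≤ w := by positivity
  rw [not_and_or, not_lt, not_lt] at h5
  rcases h5 with h5 | h5
  · have c5 : ((σ (Fin.rev p) : ℕ) : ℝ) + w ≤ ((σ p : ℕ) : ℝ) := by exact_mod_cast h5
    have := pow_ineq q hq _ _ _ _ c3 (by linarith) c2
    have g := pow_le_pow_left₀ hw
      (by linarith : (w : ℝ) ≤ ((σ p : ℕ) : ℝ) - ((σ (Fin.rev p) : ℕ) : ℝ)) q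
    rw [← abs_neg]
    refine le_trans ?_ (le_abs_self _)
    linarith
  · have c5 : ((σ p : ℕ) : ℝ) + w ≤ ((σ (Fin.rev p) : ℕ) : ℝ) := by exact_mod_cast h5
    have := pow_ineq q hq _ _ _ _ c1 (by linarith) c4
    have g := pow_le_pow_left₀ hw
      (by linarith : (w : ℝ) ≤ ((σ (Fin.rev p) : ℕ) : ℝ) - ((σ p : ℕ) : ℝ)) q
    refine le_trans ?_ (le_abs_self _)
    linarith

/-- Positions used for flips. -/
def LoSet (n M : ℕ) : Finset (Fin n) := Finset.univ.filter (fun i => (i : ℕ) < 2 * M)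

lemma card_LoSet (M : ℕ) (h : 4 * M ≤ n) : (LoSet n M).card = 2 * M := by
  unfold LoSet
  rw [Fin.card_filter_val_lt]
  omega

/-- Values too close to the boundary. -/
def OutSet (n M : ℕ) : Finset (Fin n) :=
  LoSet n M ∪ (LoSet n M).image Fin.rev

lemma card_OutSet (M : ℕ) : (OutSet n M).card ≤ 4 * M := by
  unfold OutSet
  refine (Finset.card_union_le _ _).trans ?_
  have := Finset.card_image_le (s := LoSet n M) (f := Fin.rev)
  have h2 : (LoSet n M).card ≤ 2 * M := by
    unfold LoSet
    rw [Fin.card_filter_val_lt]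
    omega
  omega

lemma Pn_smallInc (q M w : ℕ) (hq : q ≠ 0) (hM : 4 * M ≤ n) (hn : 2 ≤ n) (p : Fin n)
    (hp : p ∈ LoSet n M) :
    Pn (fun σ => ¬ ((w : ℝ) ^ q ≤ |dInc q σ p|)) ≤ 8 * M / n + 2 * w / ((n : ℝ) - 1) := by
  have hn' : (2 : ℝ) ≤ n := by exact_mod_cast hn
  have hout : ∀ v : Fin n, v ∉ OutSet n M → p ≤ v ∧ v ≤ Fin.rev p := by
    intro v hv
    simp only [OutSet, LoSet, Finset.mem_union, Finset.mem_image, Finset.mem_filter,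
      Finset.mem_univ, true_and] at hv hp
    push Not at hv
    obtain ⟨h1, h2⟩ := hv
    have h3 := h2 (Fin.rev v)
    simp only [Fin.rev_rev, ne_eq, not_true_eq_false, imp_false, not_lt] at h3
    rw [Fin.le_def, Fin.le_def]
    rw [Fin.val_rev] at h3 ⊢
    omega
  have hpr : p ≠ Fin.rev p := by
    simp only [LoSet, Finset.mem_filter, Finset.mem_univ, true_and] at hp
    intro h
    have := congrArg Fin.val h
    rw [Fin.val_rev] at this
    omega
  have hmem : ∀ i : Fin n, Pn (fun σ : Equiv.Perm (Fin n) => σ i ∈ OutSet n M) ≤ 4 * M / n := by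
    intro i
    rw [le_div_iff₀ (by linarith), mul_comm, Pn_mem]
    exact_mod_cast card_OutSet (n := n) M
  have hnear : Pn (fun σ : Equiv.Perm (Fin n) =>
      (σ p : ℕ) < σ (Fin.rev p) + w ∧ (σ (Fin.rev p) : ℕ) < σ p + w) ≤ 2 * w / ((n : ℝ) - 1) := by
    rw [le_div_iff₀ (by linarith), mul_comm]
    exact Pn_near p (Fin.rev p) hpr w
  have hle : Pn (fun σ => ¬ ((w : ℝ) ^ q ≤ |dInc q σ p|)) ≤
      Pn (fun σ : Equiv.Perm (Fin n) => σ p ∈ OutSet n M ∨ (σ (Fin.rev p) ∈ OutSet n M ∨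
        ((σ p : ℕ) < σ (Fin.rev p) + w ∧ (σ (Fin.rev p) : ℕ) < σ p + w))) := by
    apply Pn_mono
    intro σ h
    by_contra hcon
    rw [not_or, not_or] at hcon
    obtain ⟨a1, a2, a3⟩ := hcon
    exact h (dInc_lower q hq σ p w (hout _ a1).1 (hout _ a1).2 (hout _ a2).1 (hout _ a2).2 a3)
  have o1 := Pn_or (fun σ : Equiv.Perm (Fin n) => σ p ∈ OutSet n M)
    (fun σ : Equiv.Perm (Fin n) => (σ (Fin.rev p) ∈ OutSet n M ∨
        ((σ p : ℕ) < σ (Fin.rev p) + w ∧ (σ (Fin.rev p) : ℕ) < σ p + w)))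
  have o2 := Pn_or (fun σ : Equiv.Perm (Fin n) => σ (Fin.rev p) ∈ OutSet n M)
    (fun σ : Equiv.Perm (Fin n) =>
        ((σ p : ℕ) < σ (Fin.rev p) + w ∧ (σ (Fin.rev p) : ℕ) < σ p + w))
  have e : (8 * M / n : ℝ) = 4 * M / n + 4 * M / n := by ring
  have m1 := hmem p
  have m2 := hmem (Fin.rev p)
  linarith

/-- Set of good pairs. -/
noncomputable def goodSet (q M w : ℕ) (σ : Equiv.Perm (Fin n)) : Finset (Fin n) :=
  (LoSet n M).filter (fun p => (w : ℝ) ^ q ≤ |dInc q σ p|)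

lemma Pn_few (q M w : ℕ) (hq : q ≠ 0) (hM0 : 0 < M) (hM : 4 * M ≤ n) (hn : 2 ≤ n) :
    Pn (fun σ : Equiv.Perm (Fin n) => (goodSet q M w σ).card < M) ≤
      2 * (8 * M / n + 2 * w / ((n : ℝ) - 1)) := by
  have hM0' : (0 : ℝ) < M := by exact_mod_cast hM0
  have h1 : (M : ℝ) * Pn (fun σ : Equiv.Perm (Fin n) => (goodSet q M w σ).card < M) ≤
      ∑ p ∈ LoSet n M, Pn (fun σ => ¬ ((w : ℝ) ^ q ≤ |dInc q σ p|)) := by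
    simp_rw [Pn_eq_En]
    rw [← En_sum, ← En_mul]
    apply En_mono
    intro σ
    split_ifs with h
    · rw [sum_boole_cl, mul_one]
      have h2 := Finset.card_filter_add_card_filter_not (s := LoSet n M)
        (fun p => (w : ℝ) ^ q ≤ |dInc q σ p|)
      rw [card_LoSet M hM] at h2
      unfold goodSet at h
      have h3 : M ≤ ((LoSet n M).filter (fun p => ¬ ((w : ℝ) ^ q ≤ |dInc q σ p|))).card := by
        omega
      have h4 : (M : ℝ) ≤
          (((LoSet n M).filter (fun p => ¬ ((w : ℝ) ^ q ≤ |dInc q σ p|))).card : ℝ) := by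
        exact_mod_cast h3
      refine h4.trans (le_of_eq ?_)
      congr!
    · rw [mul_zero]
      exact Finset.sum_nonneg fun p _ => by split_ifs <;> norm_num
  have h2 := Finset.sum_le_sum fun p hp => Pn_smallInc (n := n) q M w hq hM hn p hp
  rw [Finset.sum_const, nsmul_eq_mul, card_LoSet M hM] at h2
  push_cast at h2
  have h3 := h1.trans h2
  refine le_of_mul_le_mul_left (h3.trans (le_of_eq ?_)) hM0'
  ring

lemma levy_core (q M w J : ℕ) (hq : q ≠ 0) (hM0 : 0 < M) (hM : 4 * M ≤ n) (hn : 2 ≤ n) (t : ℝ) :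
    Pn (fun σ : Equiv.Perm (Fin n) => t ≤ rhoq q σ ∧ rhoq q σ < t + J * (w : ℝ) ^ q) ≤
      2 * (8 * M / n + 2 * w / ((n : ℝ) - 1)) + J * ((M.choose (M / 2) : ℝ) / 2 ^ M) := by
  have hfew := Pn_few (n := n) q M w hq hM0 hM hn
  generalize hwin : (fun σ : Equiv.Perm (Fin n) =>
    t ≤ rhoq q σ ∧ rhoq q σ < t + J * (w : ℝ) ^ q) = win
  have h1 : (2 : ℝ) ^ (2 * M) * Pn win = ∑ S ∈ (LoSet n M).powerset,
      Pn (fun σ => win (σ * flipS S)) := by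
    have : ∀ S ∈ (LoSet n M).powerset, Pn (fun σ => win (σ * flipS S)) = Pn win :=
      fun S _ => Pn_comp (Equiv.mulRight (flipS S)) win
    rw [Finset.sum_congr rfl this, Finset.sum_const, nsmul_eq_mul, Finset.card_powerset,
      card_LoSet M hM]
    push_cast; ring
  have hLo : ∀ S ∈ (LoSet n M).powerset, ∀ i ∈ S, Fin.rev i ∉ S := by
    intro S hS i hi hi'
    rw [Finset.mem_powerset] at hS
    have a1 := hS hi
    have a2 := hS hi'
    simp only [LoSet, Finset.mem_filter, Finset.mem_univ, true_and, Fin.val_rev] at a1 a2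
    omega
  have h2 : ∑ S ∈ (LoSet n M).powerset, Pn (fun σ => win (σ * flipS S)) ≤
      2 ^ (2 * M) * Pn (fun σ : Equiv.Perm (Fin n) => (goodSet q M w σ).card < M) +
        J * ((M.choose (M / 2) : ℝ) * 2 ^ M) := by
    simp_rw [Pn_eq_En]
    rw [← En_sum, ← En_mul, ← En_const (n := n) (J * ((M.choose (M / 2) : ℝ) * 2 ^ M)), ← En_add]
    apply En_mono
    intro σ
    rw [sum_boole_cl]
    split_ifs with h
    · have c1 : ((LoSet n M).powerset.filter (fun S => win (σ * flipS S))).card ≤ 2 ^ (2 * M) := by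
        refine (Finset.card_filter_le _ _).trans ?_
        rw [Finset.card_powerset, card_LoSet M hM]
      have c2 : (((LoSet n M).powerset.filter (fun S => win (σ * flipS S))).card : ℝ)
          ≤ 2 ^ (2 * M) := by exact_mod_cast c1
      have c3 : (0 : ℝ) ≤ J * ((M.choose (M / 2) : ℝ) * 2 ^ M) := by positivity
      linarith
    · rw [mul_zero, zero_add]
      obtain ⟨G, hG1, hG2⟩ := Finset.exists_subset_card_eq (not_lt.1 h)
      have hGL : G ⊆ LoSet n M := hG1.trans (Finset.filter_subset _ _)
      have c1 := lo_count3 (LoSet n M) G hGL (dInc q σ) ((w : ℝ) ^ q) (t - rhoq q σ) J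
        (fun p hp => (Finset.mem_filter.1 (hG1 hp)).2)
      rw [hG2, card_LoSet M hM, (by omega : 2 * M - M = M)] at c1
      have c2 : ((LoSet n M).powerset.filter (fun S => win (σ * flipS S))) =
          (LoSet n M).powerset.filter (fun S => t - rhoq q σ ≤ ∑ p ∈ S, dInc q σ p ∧
            ∑ p ∈ S, dInc q σ p < t - rhoq q σ + J * (w : ℝ) ^ q) := by
        apply Finset.filter_congr
        intro S hS
        simp only [← hwin]
        rw [rhoq_flip q σ S (hLo S hS)]
        constructor <;> rintro ⟨b1, b2⟩ <;> constructor <;> linarith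
      rw [c2]
      exact_mod_cast c1
  rw [← h1] at h2
  have hp : (0 : ℝ) < 2 ^ (2 * M) := by positivity
  refine le_of_mul_le_mul_left (h2.trans ?_) hp
  rw [mul_add]
  refine add_le_add (mul_le_mul_of_nonneg_left hfew hp.le) (le_of_eq ?_)
  have : (2 : ℝ) ^ (2 * M) = 2 ^ M * 2 ^ M := by rw [two_mul, pow_add]
  rw [this]
  field_simp

lemma levy (q : ℕ) (hq : q ≠ 0) (ε : ℝ) (hε : 0 < ε) :
    ∃ n₀ : ℕ, ∀ n ≥ n₀, ∀ t : ℝ,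
      Pn (fun σ : Equiv.Perm (Fin n) => |rhoq q σ - t| ≤ 2 * (n : ℝ) ^ q) ≤ ε := by
  obtain ⟨L, hL⟩ := exists_nat_gt (24 / ε)
  have hL0 : (0 : ℝ) < L := lt_trans (by positivity) hL
  have hL0' : 0 < L := by exact_mod_cast hL0
  have hL1 : 8 / (L : ℝ) ≤ ε / 3 := by
    rw [div_lt_iff₀ hε] at hL
    rw [div_le_div_iff₀ hL0 (by norm_num)]
    linarith
  set J : ℕ := 4 * (2 * L) ^ q + 1 with hJ
  have hJ0 : (0 : ℝ) < J := by positivity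
  obtain ⟨m, hm0, hm⟩ : ∃ m : ℕ, 0 < m ∧ (Nat.centralBinom m : ℝ) / 4 ^ m < ε / (3 * J) := by
    have := cb_tendsto.eventually (gt_mem_nhds (show (0 : ℝ) < ε / (3 * J) by positivity))
    obtain ⟨m, h1, h2⟩ := (this.and (eventually_gt_atTop 0)).exists
    exact ⟨m, h2, h1⟩
  obtain ⟨n₁, hn₁⟩ := exists_nat_gt (96 * m / ε : ℝ)
  refine ⟨max (max 2 n₁) (max (4 * (2 * m)) L), ?_⟩
  intro n hn t
  simp only [ge_iff_le, max_le_iff] at hn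
  obtain ⟨⟨hn2, hn1⟩, hn4, hnL⟩ := hn
  have hn2' : (2 : ℝ) ≤ n := by exact_mod_cast hn2
  set w : ℕ := n / L with hw
  have hw1 : (w : ℝ) ≤ n / L := Nat.cast_div_le
  have hw2 : (n : ℝ) ≤ 2 * L * w := by
    have : n ≤ 2 * L * w := by
      have h1 : 1 ≤ w := (Nat.one_le_div_iff hL0').2 hnL
      have h2 : n < L * (w + 1) := by
        rw [hw]; exact Nat.lt_mul_div_succ n hL0'
      nlinarith
    exact_mod_cast this
  have hcore := levy_core (n := n) q (2 * m) w J hq (by omega) hn4 hn2 (t - 2 * (n : ℝ) ^ q)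
  have hwin : Pn (fun σ : Equiv.Perm (Fin n) => |rhoq q σ - t| ≤ 2 * (n : ℝ) ^ q) ≤
      Pn (fun σ : Equiv.Perm (Fin n) => t - 2 * (n : ℝ) ^ q ≤ rhoq q σ ∧
        rhoq q σ < t - 2 * (n : ℝ) ^ q + J * (w : ℝ) ^ q) := by
    apply Pn_mono
    intro σ h
    rw [abs_le] at h
    have h1 : (n : ℝ) ^ q ≤ (2 * L) ^ q * (w : ℝ) ^ q := by
      rw [← mul_pow]
      exact pow_le_pow_left₀ (by linarith) hw2 q
    have h2 : (0 : ℝ) < (w : ℝ) ^ q := by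
      have h1 : 1 ≤ w := (Nat.one_le_div_iff hL0').2 hnL
      have : (0 : ℝ) < w := by exact_mod_cast h1
      positivity
    have h3 : (J : ℝ) * (w : ℝ) ^ q = 4 * ((2 * L) ^ q * (w : ℝ) ^ q) + (w : ℝ) ^ q := by
      rw [hJ]; push_cast; ring
    rw [h3]
    constructor <;> linarith [h.1, h.2]
  refine hwin.trans (hcore.trans ?_)
  have b1 : (J : ℝ) * (((2 * m).choose (2 * m / 2) : ℝ) / 2 ^ (2 * m)) ≤ ε / 3 := by
    rw [Nat.mul_div_cancel_left m (by norm_num), ← Nat.centralBinom_eq_two_mul_choose, pow_mul]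
    norm_num
    rw [lt_div_iff₀ (by positivity)] at hm
    linarith
  have b2 : 2 * (2 * (w : ℝ) / ((n : ℝ) - 1)) ≤ 8 / L := by
    have : (n : ℝ) / L ≤ 2 * (n - 1) / L := div_le_div_of_nonneg_right (by linarith) hL0.le
    have h2 : 2 * (2 * (w : ℝ) / ((n : ℝ) - 1)) = 4 * w / ((n : ℝ) - 1) := by ring
    rw [h2, div_le_iff₀ (by linarith)]
    have h3 : 8 / (L : ℝ) * (n - 1) = 4 * (2 * (n - 1) / L) := by ring
    rw [h3]
    linarith
  have b3 : 2 * (8 * ((2 * m : ℕ) : ℝ) / n) ≤ ε / 3 := by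
    have : (n₁ : ℝ) ≤ n := by exact_mod_cast hn1
    have h1 : 96 * m / ε < (n : ℝ) := by linarith
    rw [div_lt_iff₀ hε] at h1
    have h2 : 2 * (8 * ((2 * m : ℕ) : ℝ) / n) = 32 * m / n := by push_cast; ring
    rw [h2, div_le_div_iff₀ (by linarith) (by norm_num)]
    linarith
  rw [mul_add]
  linarith

end levy

lemma levy_tendsto (q : ℕ) (hq : q ≠ 0) (t : ℕ → ℝ) :
    Tendsto (fun n : ℕ => Pn (fun σ : Equiv.Perm (Fin n) =>
      |rhoq q σ - t n| ≤ 2 * (n : ℝ) ^ q)) atTop (nhds 0) := by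
  rw [Metric.tendsto_atTop]
  intro ε hε
  obtain ⟨n₀, h⟩ := levy q hq (ε / 2) (by positivity)
  refine ⟨n₀, fun n hn => ?_⟩
  rw [Real.dist_eq, sub_zero, abs_of_nonneg (Pn_nonneg _)]
  linarith [h n hn (t n)]

lemma exists_threshold (q n : ℕ) (y : ℝ) :
    ∃ T : ℝ, ∀ σ : Equiv.Perm (Fin n), rhoqBar q σ ≤ y ↔ rhoq q σ ≤ T := by
  unfold rhoqBar
  rcases (Real.sqrt_nonneg (VarN (rhoq q (n := n)))).eq_or_lt with h | h
  · rw [← h]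
    simp only [div_zero]
    by_cases hy : 0 ≤ y
    · obtain ⟨T, hT⟩ := Finite.bddAbove_range (rhoq q (n := n))
      exact ⟨T, fun σ => iff_of_true hy (hT ⟨σ, rfl⟩)⟩
    · refine ⟨-1, fun σ => iff_of_false hy ?_⟩
      have : 0 ≤ rhoq q σ := by unfold rhoq; positivity
      linarith
  · refine ⟨y * Real.sqrt (VarN (rhoq q (n := n))) + En (rhoq q (n := n)), fun σ => ?_⟩
    rw [div_le_iff₀ h, sub_le_iff_le_add]

/-- The forbidden corner board. -/
noncomputable def board (x : ℝ) (n : ℕ) : Finset (Fin n × Fin n) :=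
  Finset.univ.filter (fun c => (n : ℝ) - x * Real.sqrt n ≤
    |((c.2 : ℕ) : ℝ) - ((c.1 : ℕ) : ℝ)|)

lemma rhoInf_iff (x : ℝ) (n : ℕ) (hn : 0 < n) (σ : Equiv.Perm (Fin n)) :
    ((n : ℝ) - (rhoInf σ : ℝ)) / Real.sqrt n ≤ x ↔ ¬ Avoid (board x n) σ := by
  have hn' : (0 : ℝ) < n := by exact_mod_cast hn
  rw [div_le_iff₀ (Real.sqrt_pos.2 hn')]
  have hcast : ∀ i : Fin n, (((((σ i : ℕ) : ℤ) - ((i : ℕ) : ℤ)).natAbs : ℕ) : ℝ) =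
      |((σ i : ℕ) : ℝ) - ((i : ℕ) : ℝ)| := by
    intro i
    rw [Nat.cast_natAbs]; push_cast; rfl
  unfold Avoid board
  push Not
  constructor
  · intro h
    obtain ⟨i, _, hi⟩ := Finset.exists_mem_eq_sup (Finset.univ : Finset (Fin n))
      ⟨⟨0, hn⟩, Finset.mem_univ _⟩ (fun i : Fin n => (((σ i : ℕ) : ℤ) - ((i : ℕ) : ℤ)).natAbs)
    have hi' : (rhoInf σ : ℝ) = |((σ i : ℕ) : ℝ) - ((i : ℕ) : ℝ)| := by
      rw [← hcast i]; exact congrArg (Nat.cast (R := ℝ)) hi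
    refine ⟨(i, σ i), ?_, rfl⟩
    simp only [Finset.mem_filter, Finset.mem_univ, true_and]
    linarith
  · rintro ⟨⟨i, j⟩, hm, he⟩
    simp only [Finset.mem_filter, Finset.mem_univ, true_and] at hm he
    subst he
    have h1 : (((σ i : ℕ) : ℤ) - ((i : ℕ) : ℤ)).natAbs ≤ rhoInf σ :=
      Finset.le_sup (f := fun i : Fin n => (((σ i : ℕ) : ℤ) - ((i : ℕ) : ℤ)).natAbs)
        (Finset.mem_univ i)
    have h2 : ((((σ i : ℕ) : ℤ) - ((i : ℕ) : ℤ)).natAbs : ℝ) ≤ (rhoInf σ : ℝ) := by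
      exact_mod_cast h1
    rw [hcast] at h2
    linarith

lemma board_subset (x : ℝ) (n : ℕ) :
    board x n ⊆ OutSet n ⌈|x| * Real.sqrt n⌉₊ ×ˢ OutSet n ⌈|x| * Real.sqrt n⌉₊ := by
  rintro ⟨i, j⟩ h
  simp only [board, Finset.mem_filter, Finset.mem_univ, true_and] at h
  have hM : |x| * Real.sqrt n ≤ (⌈|x| * Real.sqrt n⌉₊ : ℝ) := Nat.le_ceil _
  have hx : x * Real.sqrt n ≤ |x| * Real.sqrt n :=
    mul_le_mul_of_nonneg_right (le_abs_self x) (Real.sqrt_nonneg _)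
  generalize ⌈|x| * Real.sqrt n⌉₊ = M at *
  have hlow : ∀ v : Fin n, (v : ℕ) < 2 * M → v ∈ OutSet n M := by
    intro v hv
    simp [OutSet, LoSet, hv]
  have hhigh : ∀ v : Fin n, n ≤ (v : ℕ) + M → v ∈ OutSet n M := by
    intro v hv
    simp only [OutSet, LoSet, Finset.mem_union, Finset.mem_image, Finset.mem_filter,
      Finset.mem_univ, true_and]
    refine Or.inr ⟨Fin.rev v, ?_, Fin.rev_rev v⟩
    rw [Fin.val_rev]
    have := v.2
    omega
  have hi := i.2
  have hj := j.2
  rw [Finset.mem_product]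
  rcases le_total ((i : ℕ) : ℝ) ((j : ℕ) : ℝ) with hc | hc
  · rw [abs_of_nonneg (by linarith)] at h
    have h' : (n : ℝ) + ((i : ℕ) : ℝ) ≤ ((j : ℕ) : ℝ) + M := by linarith
    have h'' : n + (i : ℕ) ≤ (j : ℕ) + M := by exact_mod_cast h'
    exact ⟨hlow i (by omega), hhigh j (by omega)⟩
  · rw [abs_of_nonpos (by linarith)] at h
    have h' : (n : ℝ) + ((j : ℕ) : ℝ) ≤ ((i : ℕ) : ℝ) + M := by linarith
    have h'' : n + (j : ℕ) ≤ (i : ℕ) + M := by exact_mod_cast h'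
    exact ⟨hhigh i (by omega), hlow j (by omega)⟩

/-- `(n − ρ_∞)/√n` is asymptotically weakly independent of the random vector
`(ρ̄_1, …, ρ̄_k)`. -/
theorem rhoInf_asymp_indep_rhoqBar_vector (k : ℕ) (x : ℝ) (y : ℕ → ℝ) :
    Tendsto (fun n : ℕ =>
        Pn (fun σ : Equiv.Perm (Fin n) =>
            ((n : ℝ) - (rhoInf σ : ℝ)) / Real.sqrt n ≤ x ∧
              ∀ q ∈ Finset.Icc 1 k, rhoqBar q σ ≤ y q) -
          Pn (fun σ : Equiv.Perm (Fin n) =>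
              ((n : ℝ) - (rhoInf σ : ℝ)) / Real.sqrt n ≤ x) *
            Pn (fun σ : Equiv.Perm (Fin n) =>
              ∀ q ∈ Finset.Icc 1 k, rhoqBar q σ ≤ y q))
      atTop (nhds 0) := by
  choose T hT using fun (n q : ℕ) => exists_threshold q n (y q)
  set c : ℝ := 4 * (|x| + 1) with hc
  have hc0 : 0 ≤ c := by positivity
  have hlim : Tendsto (fun n : ℕ => 2 * (c ^ 2 * (2 * (c / Real.sqrt n) +
      ∑ q ∈ Finset.Icc 1 k, Pn (fun σ : Equiv.Perm (Fin n) =>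
        |rhoq q σ - T n q| ≤ 2 * (n : ℝ) ^ q)))) atTop (nhds 0) := by
    have h1 : Tendsto (fun n : ℕ => c / Real.sqrt n) atTop (nhds 0) :=
      Tendsto.div_atTop tendsto_const_nhds
        (Real.tendsto_sqrt_atTop.comp tendsto_natCast_atTop_atTop)
    have h2 : Tendsto (fun n : ℕ => ∑ q ∈ Finset.Icc 1 k, Pn (fun σ : Equiv.Perm (Fin n) =>
        |rhoq q σ - T n q| ≤ 2 * (n : ℝ) ^ q)) atTop (nhds (∑ q ∈ Finset.Icc 1 k, 0)) := by
      apply tendsto_finsetSum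
      intro q hq
      exact levy_tendsto q (by have := (Finset.mem_Icc.1 hq).1; omega) (fun n => T n q)
    have h3 := (((h1.const_mul 2).add h2).const_mul (c ^ 2)).const_mul 2
    simpa using h3
  apply squeeze_zero_norm' _ hlim
  filter_upwards [eventually_gt_atTop 0] with n hn
  have hn' : (1 : ℝ) ≤ n := by exact_mod_cast hn
  have hs : 1 ≤ Real.sqrt n := Real.one_le_sqrt.2 hn'
  have hss : Real.sqrt n * Real.sqrt n = n := Real.mul_self_sqrt (by linarith)
  set B : Equiv.Perm (Fin n) → Prop := fun σ => ∀ q ∈ Finset.Icc 1 k, rhoqBar q σ ≤ y q with hB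
  set bad : Equiv.Perm (Fin n) → Prop :=
    fun σ => ∃ q ∈ Finset.Icc 1 k, |rhoq q σ - T n q| ≤ 2 * (n : ℝ) ^ q with hbad_def
  have hbad : ∀ τ i j, ¬ bad τ → (B τ ↔ B (Equiv.swap (τ i) j * τ)) := by
    intro τ i j hτ
    simp only [hB, hT]
    apply forall₂_congr
    intro q hq
    have h1 : 2 * (n : ℝ) ^ q < |rhoq q τ - T n q| := by
      by_contra hcon
      exact hτ ⟨q, hq, not_lt.1 hcon⟩
    have h2 := abs_le.1 (rhoq_switch q τ i j)
    have h0 : (0 : ℝ) ≤ (n : ℝ) ^ q := by positivity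
    rcases lt_abs.1 h1 with h3 | h3
    · exact iff_of_false (by linarith) (by linarith [h2.1])
    · exact iff_of_true (by linarith) (by linarith [h2.2])
  have hmain := avoid_indep hn _ B bad hbad _ (board_subset x n)
  have hPA : Pn (fun σ : Equiv.Perm (Fin n) => ((n : ℝ) - (rhoInf σ : ℝ)) / Real.sqrt n ≤ x) =
      1 - Pn (fun σ => Avoid (board x n) σ) := by
    have := Pn_split (fun _ : Equiv.Perm (Fin n) => True) (fun σ => Avoid (board x n) σ)
    simp only [true_and, Pn_true] at this
    simp only [rhoInf_iff x n hn]
    linarith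
  have hPAB : Pn (fun σ : Equiv.Perm (Fin n) =>
      ((n : ℝ) - (rhoInf σ : ℝ)) / Real.sqrt n ≤ x ∧ B σ) =
      Pn B - Pn (fun σ => Avoid (board x n) σ ∧ B σ) := by
    have := Pn_split B (fun σ => Avoid (board x n) σ)
    simp only [rhoInf_iff x n hn]
    have e1 : Pn (fun σ => B σ ∧ Avoid (board x n) σ) =
        Pn (fun σ => Avoid (board x n) σ ∧ B σ) := by
      congr 1; ext σ; exact and_comm
    have e2 : Pn (fun σ => B σ ∧ ¬ Avoid (board x n) σ) =
        Pn (fun σ => ¬ Avoid (board x n) σ ∧ B σ) := by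
      congr 1; ext σ; exact and_comm
    linarith
  rw [hPA, hPAB, Real.norm_eq_abs, ← abs_neg]
  have e : -(Pn B - Pn (fun σ => Avoid (board x n) σ ∧ B σ) -
      (1 - Pn (fun σ => Avoid (board x n) σ)) * Pn B) =
      Pn (fun σ => Avoid (board x n) σ ∧ B σ) - Pn (fun σ => Avoid (board x n) σ) * Pn B := by
    ring
  rw [e]
  refine hmain.trans ?_
  have hPbad : Pn bad ≤ ∑ q ∈ Finset.Icc 1 k, Pn (fun σ : Equiv.Perm (Fin n) =>
        |rhoq q σ - T n q| ≤ 2 * (n : ℝ) ^ q) := Pn_exists _ _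
  have hr : ((OutSet n ⌈|x| * Real.sqrt n⌉₊).card : ℝ) ≤ c * Real.sqrt n := by
    have h1 : ((OutSet n ⌈|x| * Real.sqrt n⌉₊).card : ℝ) ≤ 4 * (⌈|x| * Real.sqrt n⌉₊ : ℝ) := by
      exact_mod_cast card_OutSet (n := n) _
    have h2 := Nat.ceil_lt_add_one (show 0 ≤ |x| * Real.sqrt n by positivity)
    rw [hc]
    nlinarith
  set r := ((OutSet n ⌈|x| * Real.sqrt n⌉₊).card : ℝ) with hrdef
  have hr0 : 0 ≤ r := by positivity
  have k1 : r ^ 2 / n ≤ c ^ 2 := by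
    rw [div_le_iff₀ (by linarith)]
    calc r ^ 2 ≤ (c * Real.sqrt n) ^ 2 := pow_le_pow_left₀ hr0 hr 2
      _ = c ^ 2 * (Real.sqrt n * Real.sqrt n) := by ring
      _ = c ^ 2 * n := by rw [hss]
  have k2 : 2 * r / n ≤ 2 * (c / Real.sqrt n) := by
    have : c / Real.sqrt n = c * Real.sqrt n / n := by
      rw [div_eq_div_iff (by linarith) (by linarith), mul_assoc c, hss]
    rw [this, mul_div_assoc]
    exact mul_le_mul_of_nonneg_left (div_le_div_of_nonneg_right hr (by linarith)) (by norm_num)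
  have hb0 := Pn_nonneg bad
  refine mul_le_mul_of_nonneg_left (mul_le_mul k1 (add_le_add k2 hPbad) ?_ (by positivity))
    (by norm_num)
  positivity
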